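/- Let γ : ℝ → ℝ² be a C^∞ regular curve with a positive generic inflection point at t = 0 (i.e. γ'(0) ≠ 0, [γ'(0), γ''(0)] = 0 and [γ'(0), γ'''(0)] > 0). Then there exist an orientation preserving equi-affine transformation T of ℝ² and a C^∞ change of parameter t = t(u) near u = 0 with t(0) = 0 and dt/du > 0 such that T(γ(t(u))) − (u, u³ + 6^{1/4}·μ_I·u⁴/4) has order higher than u⁴ at u = 0, where μ_I is the affine inflectional curvature of γ at t = 0. -/

import Mathlib

noncomputable section
open Real Set Filter Topology

/-- The determinant `[a, b] = a₁b₂ − a₂b₁` of two vectors in the plane. -/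
def det2 (a b : ℝ × ℝ) : ℝ := a.1 * b.2 - a.2 * b.1

/-- The Euclidean norm on `ℝ × ℝ`. -/
def enorm2 (a : ℝ × ℝ) : ℝ := Real.sqrt (a.1 ^ 2 + a.2 ^ 2)

/-- The Euclidean arclength parameter of `γ` based at `0`. -/
def sG (γ : ℝ → ℝ × ℝ) (t : ℝ) : ℝ := ∫ u in (0:ℝ)..t, enorm2 (deriv γ u)

/-- The affine arclength parameter of `γ` based at `0`. -/
def sA (γ : ℝ → ℝ × ℝ) (t : ℝ) : ℝ :=
  ∫ u in (0:ℝ)..t, |det2 (deriv γ u) (iteratedDeriv 2 γ u)| ^ ((1:ℝ)/3)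

/-- The Euclidean curvature `κ_g = [γ', γ'']/‖γ'‖³`. -/
def kappaG (γ : ℝ → ℝ × ℝ) (t : ℝ) : ℝ :=
  det2 (deriv γ t) (iteratedDeriv 2 γ t) / enorm2 (deriv γ t) ^ 3

/-- The affine curvature `κ_A`. -/
def kappaA (γ : ℝ → ℝ × ℝ) (t : ℝ) : ℝ :=
  (3 * det2 (deriv γ t) (iteratedDeriv 2 γ t) * det2 (deriv γ t) (iteratedDeriv 4 γ t)
    + 12 * det2 (deriv γ t) (iteratedDeriv 2 γ t)
        * det2 (iteratedDeriv 2 γ t) (iteratedDeriv 3 γ t)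
    - 5 * det2 (deriv γ t) (iteratedDeriv 3 γ t) ^ 2)
  / (9 * |det2 (deriv γ t) (iteratedDeriv 2 γ t)| ^ ((8:ℝ)/3))

/-- `γ` has a 3/2-cusp at `t = 0`. -/
def HasCusp (γ : ℝ → ℝ × ℝ) : Prop :=
  deriv γ 0 = 0 ∧ det2 (iteratedDeriv 2 γ 0) (iteratedDeriv 3 γ 0) ≠ 0

/-- The Euclidean cuspidal curvature at a 3/2-cusp `t = 0`. -/
def muG (γ : ℝ → ℝ × ℝ) : ℝ :=
  det2 (iteratedDeriv 2 γ 0) (iteratedDeriv 3 γ 0) / enorm2 (iteratedDeriv 2 γ 0) ^ ((5:ℝ)/2)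

/-- The affine cuspidal curvature at a 3/2-cusp `t = 0`. -/
def muA (γ : ℝ → ℝ × ℝ) : ℝ :=
  (24 * det2 (iteratedDeriv 2 γ 0) (iteratedDeriv 3 γ 0)
      * det2 (iteratedDeriv 2 γ 0) (iteratedDeriv 5 γ 0)
   + 60 * det2 (iteratedDeriv 2 γ 0) (iteratedDeriv 3 γ 0)
      * det2 (iteratedDeriv 3 γ 0) (iteratedDeriv 4 γ 0)
   - 35 * det2 (iteratedDeriv 2 γ 0) (iteratedDeriv 4 γ 0) ^ 2)
  / |det2 (iteratedDeriv 2 γ 0) (iteratedDeriv 3 γ 0)| ^ ((12:ℝ)/5)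

/-- `γ` (regular at `0`) has a generic inflection point at `t = 0`. -/
def HasGenericInflection (γ : ℝ → ℝ × ℝ) : Prop :=
  deriv γ 0 ≠ 0 ∧ det2 (deriv γ 0) (iteratedDeriv 2 γ 0) = 0 ∧
    det2 (deriv γ 0) (iteratedDeriv 3 γ 0) ≠ 0

/-- The affine inflectional curvature at a generic inflection point `t = 0`. -/
def muI (γ : ℝ → ℝ × ℝ) : ℝ :=
  Real.sign (det2 (deriv γ 0) (iteratedDeriv 3 γ 0)) *
    (det2 (deriv γ 0) (iteratedDeriv 4 γ 0)
      - 6 * det2 (iteratedDeriv 2 γ 0) (iteratedDeriv 3 γ 0))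
  / |det2 (deriv γ 0) (iteratedDeriv 3 γ 0)| ^ ((5:ℝ)/4)

/-- The affine map `x ↦ Ax + v` on the plane, with `A = (a b; c d)`. -/
def applyAff (a b c d : ℝ) (v : ℝ × ℝ) (p : ℝ × ℝ) : ℝ × ℝ :=
  (a * p.1 + b * p.2 + v.1, c * p.1 + d * p.2 + v.2)

/-!
Take a unimodular frame whose first axis is spanned by `γ'(0)` and whose second is spanned by
`γ'''(0)`, scaled so that `γ'(0)` becomes `(p, 0)` with `|[γ'(0), γ'''(0)]| = 6 p⁴`. In it `γ` is
`(p t + A t² + C t⁴, ±p³ t³ + w t⁴) + o(t⁴)`, up to a translation: the second coordinate has no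
`t²` term since `[γ'(0), γ''(0)] = 0`, and the first has no `t³` term by the choice of the second
axis. The parameter `u = p t + A t² + C t⁴` turns the second coordinate into
`±u³ + (w / p⁴ ∓ 3 A / p²) u⁴ + o(u⁴)`, where the coefficient of `u⁴` is `±6^{1/4} μ_I / 4`. It is
enough to invert `u` up to order four, which can be done by a polynomial in `u`.
-/

section FourJet

open Asymptotics

variable {𝕜 E F : Type*} [NontriviallyNormedField 𝕜]
  [NormedAddCommGroup E] [NormedSpace 𝕜 E] [NormedAddCommGroup F] [NormedSpace 𝕜 F]
  {v₁ v₂ v₃ v₄ : E} {a b c d : 𝕜}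

/-- The polynomial curve of degree four through the origin with the given coefficients. -/
def quartic (v₁ v₂ v₃ v₄ : E) (x : 𝕜) : E := x • v₁ + x ^ 2 • v₂ + x ^ 3 • v₃ + x ^ 4 • v₄

@[simp]
lemma quartic_zero : quartic v₁ v₂ v₃ v₄ (0 : 𝕜) = 0 := by simp [quartic]

lemma contDiff_quartic {n : WithTop ℕ∞} : ContDiff 𝕜 n (quartic v₁ v₂ v₃ v₄ : 𝕜 → E) := by
  unfold quartic
  fun_prop

lemma hasStrictDerivAt_quartic_zero (v₁ v₂ v₃ v₄ : E) :
    HasStrictDerivAt (quartic v₁ v₂ v₃ v₄ : 𝕜 → E) v₁ 0 := by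
  have hpow (n : ℕ) (v : E) := (hasStrictDerivAt_pow n (0 : 𝕜)).smul_const v
  simpa [quartic, Pi.add_def] using!
    (((hasStrictDerivAt_id (0 : 𝕜)).smul_const v₁).add (hpow 2 v₂)).add (hpow 3 v₃)
      |>.add (hpow 4 v₄)

lemma isLittleO_pow_smul_of_continuousAt {q : 𝕜 → E} (hq : ContinuousAt q 0) {m n : ℕ}
    (hmn : m < n) : (fun u ↦ u ^ n • q u) =o[𝓝 0] fun u ↦ u ^ m := by
  simpa using (isLittleO_pow_pow hmn).smul_isBigO (hq.isBigO_one 𝕜)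

lemma quartic_comp_quartic_sub_isLittleO (v₁ v₂ v₃ v₄ : E) (a b c d : 𝕜) :
    (fun u : 𝕜 ↦ quartic v₁ v₂ v₃ v₄ (quartic a b c d u) -
      quartic (a • v₁) (b • v₁ + a ^ 2 • v₂) (c • v₁ + (2 * a * b) • v₂ + a ^ 3 • v₃)
        (d • v₁ + (b ^ 2 + 2 * a * c) • v₂ + (3 * a ^ 2 * b) • v₃ + a ^ 4 • v₄) u)
      =o[𝓝 0] fun u ↦ u ^ 4 := by
  -- With `t = a u + u² m` and `m = b + u k`, the terms of degree `≥ 5` of `tⁱ` are `u⁵ qᵢ`.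
  let k (u : 𝕜) := c + u * d
  let m (u : 𝕜) := b + u * k u
  let q₂ (u : 𝕜) := 2 * a * d + 2 * b * k u + u * k u ^ 2
  let q₃ (u : 𝕜) := 3 * a ^ 2 * k u + 3 * a * m u ^ 2 + u * m u ^ 3
  let q₄ (u : 𝕜) := m u * (4 * a ^ 3 + 6 * a ^ 2 * (u * m u) + 4 * a * (u * m u) ^ 2
    + (u * m u) ^ 3)
  have hq : ContinuousAt (fun u ↦ q₂ u • v₂ + q₃ u • v₃ + q₄ u • v₄) 0 := by fun_prop
  refine (isLittleO_pow_smul_of_continuousAt hq (show 4 < 5 by norm_num)).congr_left fun u ↦ ?_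
  simp only [quartic, smul_eq_mul, q₂, q₃, q₄, m, k]
  module

/-- `f x = f 0 + x • v₁ + x ^ 2 • v₂ + x ^ 3 • v₃ + x ^ 4 • v₄ + o(x ^ 4)` at `x = 0`. The
coefficients are those of the expansion, without the factorials of the derivatives. -/
def HasFourJet (f : 𝕜 → E) (v₁ v₂ v₃ v₄ : E) : Prop :=
  (fun x ↦ f x - f 0 - quartic v₁ v₂ v₃ v₄ x) =o[𝓝 0] fun x ↦ x ^ 4

lemma hasFourJet_quartic :
    HasFourJet (quartic v₁ v₂ v₃ v₄ : 𝕜 → E) v₁ v₂ v₃ v₄ := by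
  simp [HasFourJet]

lemma HasFourJet.isBigO_sub {f : 𝕜 → E} (hf : HasFourJet f v₁ v₂ v₃ v₄) :
    (fun x ↦ f x - f 0) =O[𝓝 0] fun x ↦ x := by
  have hpow : (fun x : 𝕜 ↦ x ^ 4) =O[𝓝 0] fun x ↦ x := by
    simpa using (isLittleO_pow_pow (𝕜 := 𝕜) (show 1 < 4 by norm_num)).isBigO
  have hquartic : (quartic v₁ v₂ v₃ v₄ : 𝕜 → E) =O[𝓝 0] fun x ↦ x := by
    simpa using (hasStrictDerivAt_quartic_zero (𝕜 := 𝕜) v₁ v₂ v₃ v₄).hasDerivAt.isBigO_sub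
  simpa using (hf.isBigO.trans hpow).add hquartic

lemma HasFourJet.clm_comp {f : 𝕜 → E} (L : E →L[𝕜] F) (hf : HasFourJet f v₁ v₂ v₃ v₄) :
    HasFourJet (L ∘ f) (L v₁) (L v₂) (L v₃) (L v₄) :=
  ((L.isBigO_comp _ _).trans_isLittleO hf).congr_left fun x ↦ by simp [quartic]

lemma HasFourJet.comp {f : 𝕜 → E} {g : 𝕜 → 𝕜} (hf : HasFourJet f v₁ v₂ v₃ v₄)
    (hg : HasFourJet g a b c d) (hg0 : g 0 = 0) :
    HasFourJet (f ∘ g) (a • v₁) (b • v₁ + a ^ 2 • v₂)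
      (c • v₁ + (2 * a * b) • v₂ + a ^ 3 • v₃)
      (d • v₁ + (b ^ 2 + 2 * a * c) • v₂ + (3 * a ^ 2 * b) • v₃ + a ^ 4 • v₄) := by
  have hgO : g =O[𝓝 0] fun u ↦ u := by simpa [hg0] using hg.isBigO_sub
  have hg_tendsto : Tendsto g (𝓝 0) (𝓝 0) := hgO.trans_tendsto tendsto_id
  have hquartic_tendsto : Tendsto (quartic a b c d) (𝓝 (0 : 𝕜)) (𝓝 0) := by
    simpa using (contDiff_quartic (𝕜 := 𝕜) (n := 0)).continuous.tendsto 0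
  have houter : (fun u ↦ f (g u) - f 0 - quartic v₁ v₂ v₃ v₄ (g u)) =o[𝓝 0] fun u ↦ u ^ 4 :=
    (hf.comp_tendsto hg_tendsto).trans_isBigO (hgO.pow 4)
  have hinner : (fun u ↦ quartic v₁ v₂ v₃ v₄ (g u) - quartic v₁ v₂ v₃ v₄ (quartic a b c d u))
      =o[𝓝 0] fun u ↦ u ^ 4 :=
    ((hasStrictDerivAt_quartic_zero v₁ v₂ v₃ v₄).isBigO_sub.comp_tendsto
      (hg_tendsto.prodMk_nhds hquartic_tendsto)).trans_isLittleO (by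
        simpa [HasFourJet, hg0, Function.comp_def] using hg)
  refine ((houter.add hinner).add
    (quartic_comp_quartic_sub_isLittleO v₁ v₂ v₃ v₄ a b c d)).congr_left fun u ↦ ?_
  simp only [Function.comp_apply, hg0]
  abel

end FourJet

section Taylor

open Asymptotics

open scoped Nat

variable {E : Type*} [NormedAddCommGroup E] [NormedSpace ℝ E] {f : ℝ → E}

lemma taylor_isLittleO_of_contDiffAt {n : ℕ} {x₀ : ℝ} (hf : ContDiffAt ℝ n f x₀) :
    (fun x ↦ f x - ∑ k ∈ Finset.range (n + 1),
      ((k ! : ℝ)⁻¹ * (x - x₀) ^ k) • iteratedDeriv k f x₀)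
      =o[𝓝 x₀] fun x ↦ (x - x₀) ^ n := by
  obtain ⟨U, hU, hfU⟩ := hf.contDiffOn le_rfl (by simp)
  obtain ⟨δ, hδ, hball⟩ := Metric.mem_nhds_iff.1 hU
  have hx₀ := Metric.mem_ball_self (x := x₀) hδ
  have htaylor := taylor_isLittleO (convex_ball x₀ δ) hx₀ (hfU.mono hball)
  rw [Metric.isOpen_ball.nhdsWithin_eq hx₀] at htaylor
  simpa only [taylor_within_apply, iteratedDerivWithin_of_isOpen Metric.isOpen_ball hx₀]
    using htaylor

lemma hasFourJet_of_contDiffAt (hf : ContDiffAt ℝ 4 f 0) :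
    HasFourJet f (deriv f 0) ((1 / 2 : ℝ) • iteratedDeriv 2 f 0)
      ((1 / 6 : ℝ) • iteratedDeriv 3 f 0) ((1 / 24 : ℝ) • iteratedDeriv 4 f 0) := by
  refine (taylor_isLittleO_of_contDiffAt (n := 4) hf).congr (fun x ↦ ?_) fun x ↦ by simp
  simp only [quartic, Finset.sum_range_succ, Finset.sum_range_zero, iteratedDeriv_zero,
    iteratedDeriv_one, Nat.factorial, sub_zero]
  module

end Taylor

section AdaptedFrame

@[simp]
lemma det2_self (a : ℝ × ℝ) : det2 a a = 0 := by
  simp only [det2]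
  ring

lemma det2_smul_left (k : ℝ) (a b : ℝ × ℝ) : det2 (k • a) b = k * det2 a b := by
  simp only [det2, Prod.smul_fst, Prod.smul_snd, smul_eq_mul]
  ring

lemma det2_smul_right (k : ℝ) (a b : ℝ × ℝ) : det2 a (k • b) = k * det2 a b := by
  simp only [det2, Prod.smul_fst, Prod.smul_snd, smul_eq_mul]
  ring

variable {e f q : ℝ × ℝ} {p : ℝ}

/-- The coordinates of a plane vector in the basis `p⁻¹ • e`, `(p / [e, f]) • f`, which is
unimodular. -/
def adaptedFrame (p : ℝ) (e f : ℝ × ℝ) : ℝ × ℝ →L[ℝ] ℝ × ℝ where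
  toFun q := (p * det2 q f / det2 e f, det2 e q / p)
  map_add' q r := by ext <;> simp [det2] <;> ring
  map_smul' k q := by ext <;> simp [det2] <;> ring
  cont := by unfold det2; fun_prop

lemma adaptedFrame_apply : adaptedFrame p e f q = (p * det2 q f / det2 e f, det2 e q / p) := rfl

lemma exists_applyAff_eq_adaptedFrame_sub (hef : det2 e f ≠ 0) (hp : p ≠ 0) (q₀ : ℝ × ℝ) :
    ∃ (a b c d : ℝ) (v : ℝ × ℝ), a * d - b * c = 1 ∧
      ∀ q, applyAff a b c d v q = adaptedFrame p e f (q - q₀) := by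
  refine ⟨p * f.2 / det2 e f, -(p * f.1) / det2 e f, -e.2 / p, e.1 / p,
    -adaptedFrame p e f q₀, ?_, fun q ↦ ?_⟩
  · calc p * f.2 / det2 e f * (e.1 / p) - -(p * f.1) / det2 e f * (-e.2 / p)
        = (p / p) * (det2 e f / det2 e f) := by simp only [det2]; ring
      _ = 1 := by rw [div_self hp, div_self hef, one_mul]
  · rw [map_sub]
    ext <;> simp [applyAff, adaptedFrame_apply, det2] <;> ring

end AdaptedFrame

section Inflection

variable {f : ℝ → ℝ × ℝ} {v₁ v₂ v₃ v₄ : ℝ × ℝ} {p s A C w : ℝ}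

lemma HasFourJet.adaptedFrame_comp (hf : HasFourJet f v₁ v₂ v₃ v₄) (h₁₂ : det2 v₁ v₂ = 0)
    (h₁₃ : det2 v₁ v₃ ≠ 0) :
    HasFourJet (adaptedFrame p v₁ v₃ ∘ f) (p, 0) (p * det2 v₂ v₃ / det2 v₁ v₃, 0)
      (0, det2 v₁ v₃ / p) (p * det2 v₄ v₃ / det2 v₁ v₃, det2 v₁ v₄ / p) := by
  have hjet := hf.clm_comp (adaptedFrame p v₁ v₃)
  simpa only [adaptedFrame_apply, mul_div_cancel_right₀ p h₁₃, det2_self, h₁₂, mul_zero,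
    zero_div] using hjet

/-- The inverse of `t ↦ p * t + A * t ^ 2 + C * t ^ 4` near `0`, truncated after degree four. -/
def normalParameter (p A C : ℝ) : ℝ → ℝ :=
  quartic (1 / p) (-A / p ^ 3) (2 * A ^ 2 / p ^ 5) (-(p ^ 2 * C + 5 * A ^ 3) / p ^ 7)

lemma normalParameter_zero : normalParameter p A C 0 = 0 := quartic_zero

lemma contDiff_normalParameter {n : WithTop ℕ∞} : ContDiff ℝ n (normalParameter p A C) :=
  contDiff_quartic

lemma deriv_normalParameter_zero : deriv (normalParameter p A C) 0 = 1 / p :=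
  (hasStrictDerivAt_quartic_zero _ _ _ _).hasDerivAt.deriv

lemma hasFourJet_normalParameter :
    HasFourJet (normalParameter p A C) (1 / p) (-A / p ^ 3) (2 * A ^ 2 / p ^ 5)
      (-(p ^ 2 * C + 5 * A ^ 3) / p ^ 7) :=
  hasFourJet_quartic

lemma HasFourJet.comp_normalParameter (hp : p ≠ 0)
    (hf : HasFourJet f (p, 0) (A, 0) (0, s * p ^ 3) (C, w)) :
    HasFourJet (f ∘ normalParameter p A C) (1, 0) 0 (0, s)
      (0, w / p ^ 4 - 3 * s * A / p ^ 2) := by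
  have hjet := hf.comp (hasFourJet_normalParameter (p := p) (A := A) (C := C)) normalParameter_zero
  convert hjet using 1 <;> refine Prod.ext ?_ ?_ <;>
    simp only [Prod.smul_mk, Prod.mk_add_mk, Prod.fst_zero, Prod.snd_zero, smul_eq_mul] <;>
    field_simp <;> ring

lemma HasFourJet.exists_comp_normalParameter (hf : HasFourJet f v₁ v₂ v₃ v₄) (hp : p ≠ 0)
    (hs : s ≠ 0) (h₁₂ : det2 v₁ v₂ = 0) (h₁₃ : det2 v₁ v₃ = s * p ^ 4) :
    ∃ A C, HasFourJet (adaptedFrame p v₁ v₃ ∘ f ∘ normalParameter p A C) (1, 0) 0 (0, s)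
      (0, (det2 v₁ v₄ - 3 * det2 v₂ v₃) / p ^ 5) := by
  have hD : det2 v₁ v₃ ≠ 0 := h₁₃ ▸ mul_ne_zero hs (pow_ne_zero 4 hp)
  have hcubic : det2 v₁ v₃ / p = s * p ^ 3 := by rw [h₁₃]; field_simp
  have hquartic : (det2 v₁ v₄ - 3 * det2 v₂ v₃) / p ^ 5 =
      det2 v₁ v₄ / p / p ^ 4 - 3 * s * (p * det2 v₂ v₃ / det2 v₁ v₃) / p ^ 2 := by
    rw [h₁₃]
    field_simp
  have hjet := hf.adaptedFrame_comp (p := p) h₁₂ hD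
  rw [hcubic] at hjet
  exact ⟨_, _, hquartic ▸ hjet.comp_normalParameter hp⟩

/-- The `p > 0` with `|[γ'(0), γ'''(0)]| = 6 p⁴`; its inverse is the derivative at `0` of the
normalizing parameter. -/
def inflectionScale (γ : ℝ → ℝ × ℝ) : ℝ :=
  (|det2 (deriv γ 0) (iteratedDeriv 3 γ 0)| / 6) ^ ((1 : ℝ) / 4)

variable {γ : ℝ → ℝ × ℝ}

lemma HasGenericInflection.inflectionScale_pos (hγ : HasGenericInflection γ) :
    0 < inflectionScale γ := by
  have hD := abs_pos.2 hγ.2.2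
  unfold inflectionScale
  positivity

lemma inflectionScale_pow (γ : ℝ → ℝ × ℝ) (n : ℕ) :
    inflectionScale γ ^ n =
      (|det2 (deriv γ 0) (iteratedDeriv 3 γ 0)| / 6) ^ ((n : ℝ) / 4) := by
  rw [inflectionScale, ← Real.rpow_mul_natCast (by positivity)]
  ring_nf

lemma real_sign_mul_abs (x : ℝ) : Real.sign x * |x| = x := by
  rcases lt_trichotomy x 0 with hx | rfl | hx
  · simp [Real.sign_of_neg hx, abs_of_neg hx]
  · simp
  · simp [Real.sign_of_pos hx, abs_of_pos hx]

lemma det2_deriv_iteratedDeriv_three (γ : ℝ → ℝ × ℝ) :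
    det2 (deriv γ 0) (iteratedDeriv 3 γ 0) =
      6 * (Real.sign (det2 (deriv γ 0) (iteratedDeriv 3 γ 0)) * inflectionScale γ ^ 4) := by
  have hscale : 6 * inflectionScale γ ^ 4 = |det2 (deriv γ 0) (iteratedDeriv 3 γ 0)| := by
    rw [inflectionScale_pow, Nat.cast_ofNat, div_self four_ne_zero, Real.rpow_one]
    ring
  rw [mul_left_comm, hscale, real_sign_mul_abs]

lemma HasGenericInflection.sign_mul_muI (hγ : HasGenericInflection γ) :
    Real.sign (det2 (deriv γ 0) (iteratedDeriv 3 γ 0)) * ((6 : ℝ) ^ ((1 : ℝ) / 4) * muI γ / 4) =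
      (det2 (deriv γ 0) (iteratedDeriv 4 γ 0)
        - 6 * det2 (iteratedDeriv 2 γ 0) (iteratedDeriv 3 γ 0)) /
          (24 * inflectionScale γ ^ 5) := by
  have hsix : (6 : ℝ) ^ ((5 : ℝ) / 4) = 6 * 6 ^ ((1 : ℝ) / 4) := by
    rw [← Real.rpow_one_add' (by norm_num) (by norm_num)]
    norm_num
  have hsign : Real.sign (det2 (deriv γ 0) (iteratedDeriv 3 γ 0)) ^ 2 = 1 := by
    rcases Real.sign_apply_eq_of_ne_zero _ hγ.2.2 with h | h <;> simp [h]
  rw [muI, inflectionScale_pow, Nat.cast_ofNat, Real.div_rpow (abs_nonneg _) (by norm_num), hsix]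
  field_simp
  rw [hsign]
  ring

end Inflection

open Asymptotics in
theorem stmt_12_general (γ : ℝ → ℝ × ℝ) (hγ : ContDiffAt ℝ 4 γ 0)
    (hi : HasGenericInflection γ) :
    ∃ (a b c d : ℝ) (v : ℝ × ℝ), a * d - b * c = 1 ∧
      ∃ t : ℝ → ℝ, ContDiff ℝ (⊤ : ℕ∞) t ∧ t 0 = 0 ∧ 0 < deriv t 0 ∧
        (fun u ↦ applyAff a b c d v (γ (t u)) -
          (u, Real.sign (det2 (deriv γ 0) (iteratedDeriv 3 γ 0)) *
            (u ^ 3 + (6 : ℝ) ^ ((1 : ℝ) / 4) * muI γ * u ^ 4 / 4)))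
          =o[𝓝 0] fun u ↦ u ^ 4 := by
  set s := Real.sign (det2 (deriv γ 0) (iteratedDeriv 3 γ 0))
  set p := inflectionScale γ
  have hp : 0 < p := hi.inflectionScale_pos
  have hs : s ≠ 0 := by simpa [s, Real.sign_eq_zero_iff] using hi.2.2
  have h₁₂ : det2 (deriv γ 0) ((1 / 2 : ℝ) • iteratedDeriv 2 γ 0) = 0 := by
    rw [det2_smul_right, hi.2.1, mul_zero]
  have h₁₃ : det2 (deriv γ 0) ((1 / 6 : ℝ) • iteratedDeriv 3 γ 0) = s * p ^ 4 := by
    rw [det2_smul_right, det2_deriv_iteratedDeriv_three]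
    ring
  obtain ⟨A, C, hjet⟩ :=
    (hasFourJet_of_contDiffAt hγ).exists_comp_normalParameter hp.ne' hs h₁₂ h₁₃
  obtain ⟨a, b, c, d, v, hdet, happly⟩ := exists_applyAff_eq_adaptedFrame_sub
    (h₁₃ ▸ mul_ne_zero hs (pow_ne_zero 4 hp.ne')) hp.ne' (γ 0)
  refine ⟨a, b, c, d, v, hdet, normalParameter p A C, contDiff_normalParameter,
    normalParameter_zero, by rw [deriv_normalParameter_zero]; positivity,
    hjet.congr_left fun u ↦ ?_⟩
  have hmu := hi.sign_mul_muI
  simp only [Function.comp_apply, normalParameter_zero, happly, map_sub, det2_smul_left,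
    det2_smul_right]
  congr 1
  ext
  · simp [quartic]
  · simp only [quartic, Prod.smul_mk, Prod.snd_add, Prod.snd_zero, smul_zero, smul_eq_mul]
    linear_combination (-u ^ 4) * hmu

/-- Normal form of a positive generic inflection point: up to an orientation preserving
equi-affine transformation and parameter change, `γ` agrees with
`u ↦ (u, u³ + ⁴√6·μ_I·u⁴/4)` to order higher than `u⁴`. -/
theorem stmt_12 (γ : ℝ → ℝ × ℝ) (hγ : ContDiff ℝ (⊤:ℕ∞) γ)
    (hr : deriv γ 0 ≠ 0)
    (hi : det2 (deriv γ 0) (iteratedDeriv 2 γ 0) = 0)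
    (hp : 0 < det2 (deriv γ 0) (iteratedDeriv 3 γ 0)) :
    ∃ (a b c d : ℝ) (v : ℝ × ℝ), a * d - b * c = 1 ∧
      ∃ ε > (0:ℝ), ∃ t : ℝ → ℝ,
        ContDiffOn ℝ (⊤:ℕ∞) t (Set.Ioo (-ε) ε) ∧ t 0 = 0 ∧ 0 < deriv t 0 ∧
        Tendsto (fun u => (u ^ 4)⁻¹ •
            (applyAff a b c d v (γ (t u))
              - (u, u ^ 3 + (6:ℝ) ^ ((1:ℝ)/4) * muI γ * u ^ 4 / 4)))
          (𝓝[≠] (0:ℝ)) (𝓝 (0 : ℝ × ℝ)) := by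
  obtain ⟨a, b, c, d, v, hdet, t, ht, ht0, ht', hlittle⟩ :=
    stmt_12_general γ (contDiff_infty.1 hγ 4).contDiffAt ⟨hr, hi, hp.ne'⟩
  refine ⟨a, b, c, d, v, hdet, 1, one_pos, t, ht.contDiffOn, ht0, ht', ?_⟩
  simpa only [Real.sign_of_pos hp, one_mul] using
    (hlittle.mono nhdsWithin_le_nhds).tendsto_inv_smul_nhds_zero
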